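/- Fix k with 2 ≤ k ≤ q^t and set d = Σ_{C ∈ Ξ_k^*} |C|. Fix any r ∈ ℕ and let I = {ω^r, ω^{r+1}, …, ω^{r+d−1}}. Then the elements ω^r, …, ω^{r+d−1} are pairwise distinct (so |I| = d), and there exist coefficients M(j,β) ∈ B (for 0 ≤ j ≤ d−1 and β ∈ F \ ({0} ∪ I)) such that for every f ∈ F[X] with deg f < k and every j ∈ {0,…,d−1}: Tr(f(ω^{r+j})/ω^{r+j}) = Σ_{β ∈ F \ ({0} ∪ I)} M(j,β) · Tr(f(β)/β). -/

import Mathlib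

/-- The cyclotomic coset of `i` modulo `q^t - 1` (with respect to `q`):
the orbit `{i * q^j mod (q^t - 1) : j ≥ 0}`. -/
def cycCoset (q t i : ℕ) : Set ℕ := {b : ℕ | ∃ j : ℕ, b = i * q ^ j % (q ^ t - 1)}

/-- `Ξ_k^*`: the collection of cyclotomic cosets modulo `q^t - 1` all of whose
elements lie in `{2, 3, …, q^t - k}`. -/
def XiStar (q t k : ℕ) : Set (Set ℕ) :=
  {C : Set ℕ | (∃ i : ℕ, i ≤ q ^ t - 2 ∧ C = cycCoset q t i) ∧ C ⊆ Set.Icc 2 (q ^ t - k)}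

/-!
Let `S` be the union of the cosets in `Ξ_k^*`, so `#S = d`, and let `V` be the `F`-span of the
functions `x ↦ x ^ e`, `e ∈ S`. Three facts give the repair coefficients.

* `V` is closed under `g ↦ g ^ q`, since `S` is closed under multiplication by `q`.
* The values of `g ∈ V` at `ω ^ r, …, ω ^ (r + d - 1)` determine `g` and are arbitrary, by
  Vandermonde. Applied to `g ^ q - g`, uniqueness shows that `g` is `B`-valued once its values at
  these points lie in `B`.
* `∑ x, g x * (f x / x) = 0` for `g ∈ V` and `deg f < k`, since only monomials `x ^ m` with
  `m < q ^ t - 1` occur.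

Take `g ∈ V` with value `1` at `ω ^ (r + j)` and `0` at the other `ω ^ (r + i)`. Being `B`-valued,
it can be moved into the trace in the last relation, which then expresses the trace at
`ω ^ (r + j)` through the traces outside `{0} ∪ I`.
-/

open Finset Polynomial

section Vandermonde

variable {ι : Type*} [Fintype ι]

lemma eq_zero_of_forall_sum_mul_pow_add_eq_zero {R : Type*} [CommRing R] [IsDomain R] {v : ι → R}
    (hv : Function.Injective v) (hv0 : ∀ s, v s ≠ 0) (r : ℕ) {a : ι → R}
    (h : ∀ i < Fintype.card ι, ∑ s, a s * v s ^ (r + i) = 0) : a = 0 := by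
  let φ := Fintype.equivFin ι
  have hscaled : (fun s => a (φ.symm s) * v (φ.symm s) ^ r) = 0 := by
    refine Matrix.eq_zero_of_forall_pow_sum_mul_pow_eq_zero (hv.comp φ.symm.injective) fun i => ?_
    rw [← h i i.2, ← φ.symm.sum_comp]
    simp only [Function.comp_apply, pow_add, mul_assoc]
  funext s
  have hs : a s * v s ^ r = 0 := by simpa using congrFun hscaled (φ s)
  exact (mul_eq_zero.1 hs).resolve_right (pow_ne_zero _ (hv0 s))

lemma exists_forall_sum_mul_pow_add_eq {K : Type*} [Field K] {v : ι → K}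
    (hv : Function.Injective v) (hv0 : ∀ s, v s ≠ 0) (r : ℕ) (c : ℕ → K) :
    ∃ a : ι → K, ∀ i < Fintype.card ι, ∑ s, a s * v s ^ (r + i) = c i := by
  let L : (ι → K) →ₗ[K] (Fin (Fintype.card ι) → K) :=
    (Matrix.of fun s (i : Fin (Fintype.card ι)) => v s ^ (r + i : ℕ)).vecMulLinear
  have hL : Function.Injective L := (injective_iff_map_eq_zero L).2 fun a ha =>
    eq_zero_of_forall_sum_mul_pow_add_eq_zero hv hv0 r fun i hi => congrFun ha ⟨i, hi⟩
  obtain ⟨a, ha⟩ := (LinearMap.injective_iff_surjective_of_finrank_eq_finrank (by simp)).1 hL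
    fun i => c i
  exact ⟨a, fun i hi => congrFun ha ⟨i, hi⟩⟩

end Vandermonde

section MonomialSpan

/-- The space of functions `R → R` spanned by the monomial functions `x ↦ x ^ e` with `e ∈ S`. -/
def monomialSpan (R : Type*) [CommSemiring R] (S : Set ℕ) : Submodule R (R → R) :=
  Submodule.span R ((fun e x => x ^ e) '' S)

lemma pow_mem_monomialSpan {R : Type*} [CommSemiring R] {S : Set ℕ} {e : ℕ} (he : e ∈ S) :
    (fun x => x ^ e) ∈ monomialSpan R S :=
  Submodule.subset_span ⟨e, he, rfl⟩

variable {S : Finset ℕ}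

lemma sum_smul_pow_apply_pow {R : Type*} [CommSemiring R] (a : S → R) (ω : R) (n : ℕ) :
    (∑ e, a e • fun x : R => x ^ (e : ℕ)) (ω ^ n) = ∑ e, a e * (ω ^ (e : ℕ)) ^ n := by
  simp only [Finset.sum_apply, Pi.smul_apply, smul_eq_mul, pow_right_comm]

lemma eq_zero_of_mem_monomialSpan {R : Type*} [CommRing R] [IsDomain R] {ω : R} (hω : ω ≠ 0)
    (hinj : Set.InjOn (ω ^ ·) (S : Set ℕ)) (r : ℕ) {g : R → R} (hg : g ∈ monomialSpan R S)
    (h : ∀ i < #S, g (ω ^ (r + i)) = 0) : g = 0 := by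
  obtain ⟨a, rfl⟩ := (Submodule.mem_span_image_finset_iff_exists_fun R).1 hg
  have hv : Function.Injective fun e : S => ω ^ (e : ℕ) := Set.injOn_iff_injective.1 hinj
  have ha : a = 0 := eq_zero_of_forall_sum_mul_pow_add_eq_zero hv
    (fun _ => pow_ne_zero _ hω) r fun i hi => by
      rw [← h i (by simpa using hi)]
      exact (sum_smul_pow_apply_pow a _ _).symm
  simp [ha]

lemma exists_mem_monomialSpan_forall_eq {K : Type*} [Field K] {ω : K} (hω : ω ≠ 0)
    (hinj : Set.InjOn (ω ^ ·) (S : Set ℕ)) (r : ℕ) (c : ℕ → K) :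
    ∃ g ∈ monomialSpan K S, ∀ i < #S, g (ω ^ (r + i)) = c i := by
  have hv : Function.Injective fun e : S => ω ^ (e : ℕ) := Set.injOn_iff_injective.1 hinj
  obtain ⟨a, ha⟩ := exists_forall_sum_mul_pow_add_eq hv (fun _ => pow_ne_zero _ hω) r c
  refine ⟨∑ e, a e • fun x => x ^ (e : ℕ),
    Submodule.sum_smul_mem _ _ fun e _ => pow_mem_monomialSpan e.2, fun i hi => ?_⟩
  rw [sum_smul_pow_apply_pow]
  exact ha i (by simpa using hi)

end MonomialSpan

section FiniteField

lemma mem_range_algebraMap_iff_pow_card_eq {B R : Type*} [Field B] [Fintype B]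
    [CommRing R] [IsDomain R] [Algebra B R] {x : R} :
    x ∈ (algebraMap B R).range ↔ x ^ Fintype.card B = x := by
  constructor
  · rintro ⟨b, rfl⟩
    rw [← map_pow, FiniteField.pow_card]
  · intro hx
    have hsplits : (X ^ Fintype.card B - X : B[X]).Splits := by
      simpa using IsSplittingField.splits B (X ^ Fintype.card B - X : B[X])
    exact hsplits.mem_range_of_isRoot
      (FiniteField.X_pow_card_sub_X_ne_zero B Fintype.one_lt_card) (by simp [hx])

variable {F : Type*} [Field F] [Fintype F]

lemma pow_mod_card_sub_one {n : ℕ} (hn : n % (Fintype.card F - 1) ≠ 0) (x : F) :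
    x ^ (n % (Fintype.card F - 1)) = x ^ n := by
  rcases eq_or_ne x 0 with rfl | hx
  · rw [zero_pow hn, zero_pow (by rintro rfl; simp at hn)]
  · conv_rhs => rw [← Nat.div_add_mod n (Fintype.card F - 1)]
    rw [pow_add, pow_mul, FiniteField.pow_card_sub_one_eq_one x hx, one_pow, one_mul]

lemma injOn_pow_add_of_isPrimitiveRoot {M : Type*} [CommMonoid M] {ζ : M} {n : ℕ}
    (hζ : IsPrimitiveRoot ζ n) (r : ℕ) : Set.InjOn (fun j => ζ ^ (r + j)) (Set.Iio n) := by
  intro i hi j hj h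
  simp only [pow_add] at h
  exact hζ.pow_inj hi hj <|
    ((hζ.isUnit (Nat.ne_zero_of_lt hi)).pow r).mul_left_cancel h

lemma isPrimitiveRoot_of_forall_exists_pow (hF : 2 < Fintype.card F) {ω : F}
    (hω : ∀ x : F, x ≠ 0 → ∃ j : ℕ, x = ω ^ j) : IsPrimitiveRoot ω (Fintype.card F - 1) := by
  classical
  have hω0 : ω ≠ 0 := by
    rintro rfl
    obtain ⟨x, -, hx⟩ := exists_mem_notMem_of_card_lt_card
      (s := {0, 1}) (t := (univ : Finset F)) (card_le_two.trans_lt (by simpa using hF))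
    simp only [mem_insert, mem_singleton, not_or] at hx
    obtain ⟨j, rfl⟩ := hω x hx.1
    rcases j.eq_zero_or_pos with rfl | hj
    · exact hx.2 (pow_zero _)
    · exact hx.1 (zero_pow hj.ne')
  have hgen : ∀ u : Fˣ, u ∈ Subgroup.zpowers (Units.mk0 ω hω0) := fun u => by
    obtain ⟨j, hj⟩ := hω u u.ne_zero
    exact ⟨j, by ext; simp [hj]⟩
  rw [IsPrimitiveRoot.iff_orderOf, ← Units.val_mk0 hω0, orderOf_units,
    orderOf_eq_card_of_forall_mem_zpowers hgen, Nat.card_eq_fintype_card, Fintype.card_units]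

lemma sum_mul_eval_div_eq_zero {k : ℕ} {S : Set ℕ} (hS2 : ∀ e ∈ S, 2 ≤ e)
    (hSk : ∀ e ∈ S, e + k ≤ Fintype.card F) {g : F → F} (hg : g ∈ monomialSpan F S) {f : F[X]}
    (hf : f.degree < k) : ∑ x, g x * (f.eval x / x) = 0 := by
  induction hg using Submodule.span_induction with
  | zero => simp
  | add g₁ g₂ _ _ h₁ h₂ => simp only [Pi.add_apply, add_mul, sum_add_distrib, h₁, h₂, add_zero]
  | smul c g _ h => simp only [Pi.smul_apply, smul_eq_mul, mul_assoc, ← mul_sum, h, mul_zero]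
  | mem _ hmem =>
    obtain ⟨e, he, rfl⟩ := hmem
    have hexpand : ∀ x : F, x ^ e * (f.eval x / x) =
        ∑ i ∈ f.support, f.coeff i * x ^ (e - 1 + i) := fun x => by
      rw [eval_eq_sum, Polynomial.sum, ← mul_div_assoc, mul_div_right_comm, mul_sum]
      refine sum_congr rfl fun i _ => ?_
      have hdiv : x ^ e / x = x ^ (e - 1) := by
        rcases eq_or_ne x 0 with rfl | hx
        · rw [div_zero, zero_pow (by have := hS2 e he; omega)]
        · rw [pow_sub₀ x hx (by have := hS2 e he; omega), pow_one, div_eq_mul_inv]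
      rw [hdiv, pow_add]
      ring
    simp only [hexpand]
    rw [sum_comm]
    refine sum_eq_zero fun i hi => ?_
    have hik : i < k := by
      exact_mod_cast (le_degree_of_mem_supp i hi).trans_lt hf
    have := hS2 e he
    have := hSk e he
    rw [← mul_sum, FiniteField.sum_pow_lt_card_sub_one F _ (by omega), mul_zero]

end FiniteField

section TraceRepair

variable {B F : Type*} [Field B] [Field F] [Fintype F] [Algebra B F]

lemma sum_mul_trace_eval_div_eq_zero {k : ℕ} {S : Set ℕ} (hS2 : ∀ e ∈ S, 2 ≤ e)
    (hSk : ∀ e ∈ S, e + k ≤ Fintype.card F) {g : F → B}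
    (hg : algebraMap B F ∘ g ∈ monomialSpan F S) {f : F[X]} (hf : f.degree < k) :
    ∑ x, g x * Algebra.trace B F (f.eval x / x) = 0 := by
  have h := congrArg (Algebra.trace B F) (sum_mul_eval_div_eq_zero hS2 hSk hg hf)
  simpa only [map_sum, Function.comp_apply, ← Algebra.smul_def, map_smul, smul_eq_mul,
    map_zero] using h

lemma eq_sum_sdiff_neg_mul {α R : Type*} [Fintype α] [DecidableEq α] [Ring R] {T : Finset α}
    {g h : α → R} {y : α} (hy : y ∈ T) (hgy : g y = 1) (hT : ∀ x ∈ T, x ≠ y → g x * h x = 0)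
    (hsum : ∑ x, g x * h x = 0) : h y = ∑ x ∈ univ \ T, -g x * h x := by
  rw [← sum_sdiff (subset_univ T), sum_eq_single_of_mem y hy hT, hgy, one_mul] at hsum
  simpa only [neg_mul, sum_neg_distrib] using eq_neg_of_add_eq_zero_right hsum

variable [Fintype B]

lemma pow_card_mem_monomialSpan {S : Set ℕ} (hS0 : 0 ∉ S)
    (hSB : Set.MapsTo (fun e => e * Fintype.card B % (Fintype.card F - 1)) S S) {g : F → F}
    (hg : g ∈ monomialSpan F S) : g ^ Fintype.card B ∈ monomialSpan F S := by
  induction hg using Submodule.span_induction with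
  | zero => simp [Fintype.card_ne_zero]
  | add g₁ g₂ _ _ h₁ h₂ =>
    have hadd := map_add (FiniteField.frobeniusAlgHom B (F → F)) g₁ g₂
    simp only [FiniteField.coe_frobeniusAlgHom] at hadd
    exact hadd ▸ add_mem h₁ h₂
  | smul c g _ h => exact smul_pow c g _ ▸ Submodule.smul_mem _ _ h
  | mem _ hmem =>
    obtain ⟨e, he, rfl⟩ := hmem
    have hmod : (fun x : F => x ^ e) ^ Fintype.card B =
        fun x => x ^ (e * Fintype.card B % (Fintype.card F - 1)) := by
      funext x
      rw [pow_mod_card_sub_one (ne_of_mem_of_not_mem (hSB he) hS0), Pi.pow_apply, pow_mul]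
    exact hmod ▸ pow_mem_monomialSpan (hSB he)

variable {S : Finset ℕ} {ω : F}

lemma exists_algebraMap_comp_mem_monomialSpan (hω : ω ≠ 0)
    (hinj : Set.InjOn (ω ^ ·) (S : Set ℕ)) (hS0 : 0 ∉ S)
    (hSB : Set.MapsTo (fun e => e * Fintype.card B % (Fintype.card F - 1)) (S : Set ℕ) S)
    (r : ℕ) (c : ℕ → B) :
    ∃ g : F → B, algebraMap B F ∘ g ∈ monomialSpan F S ∧ ∀ i < #S, g (ω ^ (r + i)) = c i := by
  obtain ⟨g, hg, hgc⟩ := exists_mem_monomialSpan_forall_eq hω hinj r fun i => algebraMap B F (c i)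
  have hfrob : g ^ Fintype.card B - g = 0 :=
    eq_zero_of_mem_monomialSpan hω hinj r
      (sub_mem (pow_card_mem_monomialSpan (by simpa using hS0) hSB hg) hg) fun i hi => by
        rw [Pi.sub_apply, Pi.pow_apply, hgc i hi, sub_eq_zero,
          ← mem_range_algebraMap_iff_pow_card_eq]
        exact RingHom.mem_range_self _ _
  have hrange : ∀ x, ∃ b, algebraMap B F b = g x := fun x =>
    mem_range_algebraMap_iff_pow_card_eq.2 (congrFun (sub_eq_zero.1 hfrob) x)
  choose g' hg' using hrange
  obtain rfl : algebraMap B F ∘ g' = g := funext hg'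
  exact ⟨g', hg, fun i hi => (algebraMap B F).injective (hgc i hi)⟩

theorem exists_trace_eval_div_eq_sum [DecidableEq F] {k : ℕ}
    (hω : IsPrimitiveRoot ω (Fintype.card F - 1)) (hS : S ⊆ range (Fintype.card F - 1))
    (hS2 : ∀ e ∈ S, 2 ≤ e) (hSk : ∀ e ∈ S, e + k ≤ Fintype.card F)
    (hSB : Set.MapsTo (fun e => e * Fintype.card B % (Fintype.card F - 1)) (S : Set ℕ) S)
    (r : ℕ) :
    ∃ M : ℕ → F → B, ∀ f : F[X], f.degree < k → ∀ j < #S,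
      Algebra.trace B F (f.eval (ω ^ (r + j)) / ω ^ (r + j)) =
        ∑ β ∈ univ \ insert 0 ((range #S).image fun i => ω ^ (r + i)),
          M j β * Algebra.trace B F (f.eval β / β) := by
  have hω0 : ω ≠ 0 := hω.ne_zero (Nat.sub_pos_of_lt Fintype.one_lt_card).ne'
  have hinj : Set.InjOn (ω ^ ·) (S : Set ℕ) := fun i hi j hj =>
    hω.pow_inj (mem_range.1 (hS hi)) (mem_range.1 (hS hj))
  have hS0 : 0 ∉ S := fun h => absurd (hS2 0 h) (by decide)
  choose g hg hgδ using fun j : ℕ =>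
    exists_algebraMap_comp_mem_monomialSpan hω0 hinj hS0 hSB r (Pi.single j 1)
  refine ⟨fun j β => -g j β, fun f hf j hj => ?_⟩
  refine eq_sum_sdiff_neg_mul (h := fun β => Algebra.trace B F (f.eval β / β))
    (mem_insert_of_mem (mem_image_of_mem _ (mem_range.2 hj))) (by simp [hgδ j j hj])
    (fun x hx hne => ?_) (sum_mul_trace_eval_div_eq_zero hS2 hSk (hg j) hf)
  rcases mem_insert.1 hx with rfl | hx
  · simp
  · obtain ⟨i, hi, rfl⟩ := mem_image.1 hx
    have hij : i ≠ j := by rintro rfl; exact hne rfl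
    simp [hgδ j i (mem_range.1 hi), hij]

end TraceRepair

section CyclotomicCosets

variable {q t : ℕ}

lemma mul_mod_mem_cycCoset {i b : ℕ} (hb : b ∈ cycCoset q t i) :
    b * q % (q ^ t - 1) ∈ cycCoset q t i := by
  obtain ⟨j, rfl⟩ := hb
  exact ⟨j + 1, by rw [Nat.mod_mul_mod, pow_succ, mul_assoc]⟩

lemma cycCoset_eq_of_mem (hq : 1 ≤ q) (ht : 1 ≤ t) {i b : ℕ} (hb : b ∈ cycCoset q t i) :
    cycCoset q t b = cycCoset q t i := by
  obtain ⟨j, rfl⟩ := hb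
  have hshift (l : ℕ) : i * q ^ j % (q ^ t - 1) * q ^ l ≡ i * q ^ (j + l) [MOD q ^ t - 1] := by
    rw [pow_add, ← mul_assoc]
    exact (Nat.mod_modEq _ _).mul_right _
  have hperiod : q ^ t ≡ 1 [MOD q ^ t - 1] :=
    ((Nat.modEq_iff_dvd' (Nat.one_le_pow _ _ hq)).2 dvd_rfl).symm
  ext c
  constructor
  · rintro ⟨l, rfl⟩
    exact ⟨j + l, hshift l⟩
  · rintro ⟨l, rfl⟩
    have hexp : j + (l + j * (t - 1)) = t * j + l := by
      obtain ⟨u, rfl⟩ := Nat.exists_eq_add_of_le ht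
      rw [Nat.add_sub_cancel_left]
      ring
    refine ⟨l + j * (t - 1), ((hshift _).trans ?_).symm⟩
    rw [hexp, pow_add, pow_mul]
    simpa using ((hperiod.pow j).mul_right (q ^ l)).mul_left i

lemma pairwiseDisjoint_XiStar (hq : 1 ≤ q) (ht : 1 ≤ t) (k : ℕ) :
    (XiStar q t k).PairwiseDisjoint id := by
  rintro _ ⟨⟨i, -, rfl⟩, -⟩ _ ⟨⟨i', -, rfl⟩, -⟩ hne
  refine Set.disjoint_left.2 fun b hb hb' => hne ?_
  rw [← cycCoset_eq_of_mem hq ht hb, ← cycCoset_eq_of_mem hq ht hb']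

lemma sUnion_XiStar_subset (q t k : ℕ) : ⋃₀ XiStar q t k ⊆ Set.Icc 2 (q ^ t - k) :=
  Set.sUnion_subset fun _ hC => hC.2

lemma ncard_sUnion_XiStar (hq : 1 ≤ q) (ht : 1 ≤ t) (k : ℕ) :
    (⋃₀ XiStar q t k).ncard = ∑ᶠ C ∈ XiStar q t k, C.ncard := by
  have hfin : (XiStar q t k).Finite :=
    (Set.finite_Icc 2 (q ^ t - k)).finite_subsets.subset fun _ hC => hC.2
  rw [Set.sUnion_eq_biUnion]
  exact hfin.ncard_biUnion (fun _ hC => (Set.finite_Icc _ _).subset hC.2)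
    (pairwiseDisjoint_XiStar hq ht k)

lemma mapsTo_sUnion_XiStar (q t k : ℕ) :
    Set.MapsTo (fun e => e * q % (q ^ t - 1)) (⋃₀ XiStar q t k) (⋃₀ XiStar q t k) := by
  rintro b ⟨C, hC, hb⟩
  obtain ⟨⟨i, -, rfl⟩, -⟩ := id hC
  exact ⟨_, hC, mul_mod_mem_cycCoset hb⟩

end CyclotomicCosets

theorem stmt_14 (q t k d r : ℕ) (hq : ∃ p m : ℕ, p.Prime ∧ 0 < m ∧ q = p ^ m) (ht : 1 ≤ t)
    (hk2 : 2 ≤ k) (hk : k ≤ q ^ t)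
    (hd : d = ∑ᶠ C ∈ XiStar q t k, C.ncard)
    (B F : Type) [Field B] [Fintype B] [Field F] [Fintype F] [DecidableEq F] [Algebra B F]
    (hB : Fintype.card B = q) (hrank : Module.finrank B F = t)
    (hF : Fintype.card F = q ^ t)
    (ω : F) (hω : ∀ x : F, x ≠ 0 → ∃ j : ℕ, x = ω ^ j) :
    (∀ j₁ : ℕ, j₁ < d → ∀ j₂ : ℕ, j₂ < d → ω ^ (r + j₁) = ω ^ (r + j₂) → j₁ = j₂) ∧
    ∃ M : ℕ → F → B,
      ∀ f : Polynomial F, f.degree < (k : WithBot ℕ) →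
        ∀ j : ℕ, j < d →
          Algebra.trace B F (f.eval (ω ^ (r + j)) / ω ^ (r + j)) =
            ∑ β ∈ Finset.univ \
                insert (0 : F) ((Finset.range d).image fun j' => ω ^ (r + j')),
              M j β * Algebra.trace B F (f.eval β / β) := by
  have hfin := (Set.finite_Icc 2 (q ^ t - k)).subset (sUnion_XiStar_subset q t k)
  obtain ⟨S, hS⟩ := hfin.exists_finset_coe
  have hcard : #S = d := by
    rw [hd, ← ncard_sUnion_XiStar (hB ▸ Fintype.card_pos) ht k, ← hS, Set.ncard_coe_finset]
  have hIcc : ∀ e ∈ S, 2 ≤ e ∧ e ≤ q ^ t - k := fun e he =>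
    sUnion_XiStar_subset q t k (hS ▸ mem_coe.2 he)
  have hSB := mapsTo_sUnion_XiStar q t k
  rw [← hS, ← hF, ← hB] at hSB
  rw [← hF] at hIcc
  rw [← hcard]
  rcases S.eq_empty_or_nonempty with rfl | ⟨e₀, he₀⟩
  · simp
  have hFcard : 2 < Fintype.card F := by have := hIcc e₀ he₀; omega
  have hω' := isPrimitiveRoot_of_forall_exists_pow hFcard hω
  have hrange : S ⊆ range (Fintype.card F - 1) := fun e he =>
    mem_range.2 (by have := hIcc e he; omega)
  have hle : #S ≤ Fintype.card F - 1 := by simpa using card_le_card hrange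
  refine ⟨fun j₁ h₁ j₂ h₂ h => ?_, ?_⟩
  · exact injOn_pow_add_of_isPrimitiveRoot hω' r (h₁.trans_le hle) (h₂.trans_le hle) h
  · exact exists_trace_eval_div_eq_sum hω' hrange (fun e he => (hIcc e he).1)
      (fun e he => by have := hIcc e he; omega) hSB r
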